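/- Let Π be a DatalogMTL program and D a dataset such that T_Π(ℑ_D) = ℑ_D, and let E be a set of facts each of whose intervals is (−∞,+∞). Then T_{Π ∪ swap(E)}(ℑ_D) = ℑ_{D ∪ E}, i.e. a single application of the immediate consequence operator of the extended program to the least model of D yields exactly the least model of D ∪ E. -/

import Mathlib

/-! The inclusion `ℑ_{D ∪ E} ⊆ T_{P ∪ swap(E)}(ℑ_D)` is immediate: the operator keeps `ℑ_D`, and
each rule `R(c) ← ⊤` of `swap(E)` derives its head at every time point.

For the converse, minimality of `T_{P ∪ swap(E)}(ℑ_D)` reduces the claim to showing that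
`ℑ_{D ∪ E}` contains `ℑ_D` and satisfies the head of every rule instance whose body holds in `ℑ_D`.
For the rules of `swap(E)` this holds because the facts of `E` hold everywhere. For a rule of `P`,
legal heads (built from `⊤`, relational atoms and boxes only) are preserved under intersections of
interpretations (`satAt_head_iInter`), so `T_P(ℑ_D)`, defined as an intersection, really satisfies
the derived heads (`satAt_head_TP`). As `T_P(ℑ_D) = ℑ_D`, the head already holds in `ℑ_D`, and it
still holds in the larger `ℑ_{D ∪ E}` by monotonicity (`satAt_mono`). -/

/-! # DatalogMTL: syntax, semantics, and the magic-set rewriting -/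

/-- Terms: variables and constants (names are strings). -/
inductive Term where
  | var (v : String)
  | const (c : String)
deriving DecidableEq

/-- An adornment is a list of booleans (`true` = bound `b`, `false` = free `f`). -/
abbrev Adornment := List Bool

/-- Predicates: the base predicates of the input, adorned predicates `R^γ`
(used during the rewriting), and the fresh magic predicates `m_R^γ`. -/
inductive PredSym where
  | base (name : String)
  | adorned (name : String) (γ : Adornment)
  | magic (name : String) (γ : Adornment)
deriving DecidableEq

/-- An interval of rationals, given by optional endpoints (`none` = infinite)
and openness flags. -/
structure Ivl where
  lo : Option ℚ
  hi : Option ℚ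
  loOpen : Bool
  hiOpen : Bool
deriving DecidableEq

namespace Ivl

/-- membership of a time point in an interval -/
def mem (t : ℚ) (ρ : Ivl) : Prop :=
  (match ρ.lo with
   | none => True
   | some a => if ρ.loOpen then a < t else a ≤ t) ∧
  (match ρ.hi with
   | none => True
   | some b => if ρ.hiOpen then t < b else t ≤ b)

/-- the punctual interval `[t,t]` -/
def punctual (t : ℚ) : Ivl := ⟨some t, some t, false, false⟩

/-- the interval `(-∞, +∞)` -/
def all : Ivl := ⟨none, none, true, true⟩

/-- nonemptiness of an interval -/
def NE (ρ : Ivl) : Prop := ∃ t, ρ.mem t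

/-- an interval containing only non-negative rationals -/
def Nonneg (ρ : Ivl) : Prop := ∀ t, ρ.mem t → 0 ≤ t

/-- a bounded interval (both endpoints rational) -/
def Bounded (ρ : Ivl) : Prop := ρ.lo.isSome ∧ ρ.hi.isSome

end Ivl

/-- Metric atoms. -/
inductive MAtom where
  | top
  | bot
  | rel (p : PredSym) (ts : List Term)
  | boxPlus (ρ : Ivl) (M : MAtom)
  | boxMinus (ρ : Ivl) (M : MAtom)
  | diaPlus (ρ : Ivl) (M : MAtom)
  | diaMinus (ρ : Ivl) (M : MAtom)
  | until_ (ρ : Ivl) (M₂ M₁ : MAtom)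
  | since_ (ρ : Ivl) (M₂ M₁ : MAtom)
deriving DecidableEq

namespace Term

def vars : Term → List String
  | .var v => [v]
  | .const _ => []

end Term

namespace MAtom

/-- variables occurring in a metric atom -/
def vars : MAtom → List String
  | .top | .bot => []
  | .rel _ ts => ts.flatMap Term.vars
  | .boxPlus _ M | .boxMinus _ M | .diaPlus _ M | .diaMinus _ M => M.vars
  | .until_ _ M₂ M₁ | .since_ _ M₂ M₁ => M₂.vars ++ M₁.vars

/-- predicates occurring in a metric atom -/
def preds : MAtom → List PredSym
  | .top | .bot => []
  | .rel p _ => [p]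
  | .boxPlus _ M | .boxMinus _ M | .diaPlus _ M | .diaMinus _ M => M.preds
  | .until_ _ M₂ M₁ | .since_ _ M₂ M₁ => M₂.preds ++ M₁.preds

/-- intervals mentioned by the MTL operators of a metric atom -/
def ivls : MAtom → List Ivl
  | .top | .bot | .rel _ _ => []
  | .boxPlus ρ M | .boxMinus ρ M | .diaPlus ρ M | .diaMinus ρ M => ρ :: M.ivls
  | .until_ ρ M₂ M₁ | .since_ ρ M₂ M₁ => ρ :: (M₂.ivls ++ M₁.ivls)

/-- a metric atom legal as a rule head: mentions no `⊥`, `◇⁺`, `◇⁻`, `U`, `S` -/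
def headOK : MAtom → Prop
  | .top => True
  | .bot => False
  | .rel _ _ => True
  | .boxPlus _ M => M.headOK
  | .boxMinus _ M => M.headOK
  | .diaPlus _ _ | .diaMinus _ _ | .until_ _ _ _ | .since_ _ _ _ => False

/-- well-formedness: all operator intervals are nonempty and contain only
non-negative rationals -/
def WF : MAtom → Prop
  | .top | .bot | .rel _ _ => True
  | .boxPlus ρ M | .boxMinus ρ M | .diaPlus ρ M | .diaMinus ρ M =>
      ρ.NE ∧ ρ.Nonneg ∧ M.WF
  | .until_ ρ M₂ M₁ | .since_ ρ M₂ M₁ => ρ.NE ∧ ρ.Nonneg ∧ M₂.WF ∧ M₁.WF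

/-- applying a substitution (mapping variables to constants) to a metric atom -/
def subst (σ : String → String) : MAtom → MAtom
  | .top => .top
  | .bot => .bot
  | .rel p ts =>
      .rel p (ts.map fun tm => match tm with
        | .var v => .const (σ v)
        | .const c => .const c)
  | .boxPlus ρ M => .boxPlus ρ (M.subst σ)
  | .boxMinus ρ M => .boxMinus ρ (M.subst σ)
  | .diaPlus ρ M => .diaPlus ρ (M.subst σ)
  | .diaMinus ρ M => .diaMinus ρ (M.subst σ)
  | .until_ ρ M₂ M₁ => .until_ ρ (M₂.subst σ) (M₁.subst σ)
  | .since_ ρ M₂ M₁ => .since_ ρ (M₂.subst σ) (M₁.subst σ)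

/-- an atom without MTL operators -/
def isBasic : MAtom → Prop
  | .top | .bot | .rel _ _ => True
  | _ => False

/-- no nested MTL operators -/
def nonNested : MAtom → Prop
  | .top | .bot | .rel _ _ => True
  | .boxPlus _ M | .boxMinus _ M | .diaPlus _ M | .diaMinus _ M => M.isBasic
  | .until_ _ M₂ M₁ | .since_ _ M₂ M₁ => M₂.isBasic ∧ M₁.isBasic

/-- a normal-form head: `⊞_ϱ R(s)` or `⊟_ϱ R(s)` -/
def headNF : MAtom → Prop
  | .boxPlus _ (.rel _ _) => True
  | .boxMinus _ (.rel _ _) => True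
  | _ => False

/-- whether a magic predicate occurs in the atom -/
def containsMagic (M : MAtom) : Prop :=
  ∃ p ∈ M.preds, ∃ n γ, p = PredSym.magic n γ

end MAtom

/-- A rule `head ← body`. -/
structure Rule where
  head : MAtom
  body : List MAtom
deriving DecidableEq

/-- A program is a set of rules (finiteness is part of `ProgramWF`). -/
abbrev Program := Set Rule

/-- A substitution maps variable names to constant names. -/
abbrev Subst := String → String

/-- A fact `R(c)@ϱ`. -/
structure TFact where
  pred : PredSym
  args : List String
  ivl : Ivl
deriving DecidableEq

/-- A dataset is a set of facts (finiteness is part of `DatasetWF`). -/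
abbrev Dataset := Set TFact

/-- An interpretation maps each rational time point to a set of ground
relational atoms (predicate together with a tuple of constants). -/
abbrev Interp := ℚ → Set (PredSym × List String)

/-- Satisfaction of a (ground) metric atom at a time point. -/
def satAt (ℑ : Interp) : ℚ → MAtom → Prop
  | _, .top => True
  | _, .bot => False
  | t, .rel p ts => ∃ cs : List String, ts = cs.map Term.const ∧ (p, cs) ∈ ℑ t
  | t, .boxPlus ρ M => ∀ t₁ : ℚ, Ivl.mem (t₁ - t) ρ → satAt ℑ t₁ M
  | t, .boxMinus ρ M => ∀ t₁ : ℚ, Ivl.mem (t - t₁) ρ → satAt ℑ t₁ M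
  | t, .diaPlus ρ M => ∃ t₁ : ℚ, Ivl.mem (t₁ - t) ρ ∧ satAt ℑ t₁ M
  | t, .diaMinus ρ M => ∃ t₁ : ℚ, Ivl.mem (t - t₁) ρ ∧ satAt ℑ t₁ M
  | t, .until_ ρ M₂ M₁ =>
      ∃ t₁ : ℚ, Ivl.mem (t₁ - t) ρ ∧ satAt ℑ t₁ M₁ ∧
        ∀ t₂ : ℚ, t < t₂ → t₂ < t₁ → satAt ℑ t₂ M₂
  | t, .since_ ρ M₂ M₁ =>
      ∃ t₁ : ℚ, Ivl.mem (t - t₁) ρ ∧ satAt ℑ t₁ M₁ ∧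
        ∀ t₂ : ℚ, t₁ < t₂ → t₂ < t → satAt ℑ t₂ M₂

/-- Satisfaction of a fact. -/
def satFact (ℑ : Interp) (g : TFact) : Prop :=
  ∀ t : ℚ, Ivl.mem t g.ivl → (g.pred, g.args) ∈ ℑ t

/-- An interpretation satisfies a rule if it satisfies all its ground instances. -/
def modelsRule (ℑ : Interp) (r : Rule) : Prop :=
  ∀ σ : Subst, ∀ t : ℚ,
    (∀ M ∈ r.body, satAt ℑ t (M.subst σ)) → satAt ℑ t (r.head.subst σ)

/-- model of a program -/
def modelsProg (ℑ : Interp) (P : Program) : Prop := ∀ r ∈ P, modelsRule ℑ r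

/-- model of a dataset -/
def modelsData (ℑ : Interp) (D : Dataset) : Prop := ∀ g ∈ D, satFact ℑ g

/-- Entailment `(P, D) ⊨ g`. -/
def entails (P : Program) (D : Dataset) (g : TFact) : Prop :=
  ∀ ℑ : Interp, modelsProg ℑ P → modelsData ℑ D → satFact ℑ g

/-- The least model `ℑ_D` of a dataset. -/
def leastModel (D : Dataset) : Interp :=
  fun t => {a | ∃ g ∈ D, g.pred = a.1 ∧ g.args = a.2 ∧ Ivl.mem t g.ivl}

/-- The immediate consequence operator `T_P`: the least interpretation
containing `ℑ` such that whenever the body of a ground instance of a rule of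
`P` holds in `ℑ` at `t`, its head holds in the result at `t`. -/
def TP (P : Program) (ℑ : Interp) : Interp :=
  fun t =>
    ⋂ J ∈ {J : Interp |
      (∀ u : ℚ, ℑ u ⊆ J u) ∧
      ∀ r ∈ P, ∀ σ : Subst, ∀ u : ℚ,
        (∀ M ∈ r.body, satAt ℑ u (M.subst σ)) → satAt J u (r.head.subst σ)},
    J t

/-- The (finite) iterates `ℑ₀ = ℑ_D`, `ℑ_{i+1} = T_P(ℑ_i)` of a pair `(P,D)`. -/
def iterates (P : Program) (D : Dataset) : ℕ → Interp
  | 0 => leastModel D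
  | n + 1 => TP P (iterates P D n)

/-- `g` has birth round `i` regarding `(P,D)`. -/
def birthEq (g : TFact) (P : Program) (D : Dataset) (i : ℕ) : Prop :=
  satFact (iterates P D i) g ∧ (i = 0 ∨ ¬ satFact (iterates P D (i - 1)) g)

/-- `g` has a (finite) birth round regarding `(P,D)`. -/
def hasBirth (g : TFact) (P : Program) (D : Dataset) : Prop :=
  ∃ i : ℕ, birthEq g P D i

/-- The canonical interpretation `C_{P,D}` (the least model of `(P,D)`). -/
def canonInterp (P : Program) (D : Dataset) : Interp :=
  fun t => ⋂ J ∈ {J : Interp | modelsProg J P ∧ modelsData J D}, J t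

/-- well-formed rule: nonempty body, legal well-formed head and body, safe -/
def RuleWF (r : Rule) : Prop :=
  r.body ≠ [] ∧ r.head.headOK ∧ r.head.WF ∧ (∀ M ∈ r.body, M.WF) ∧
  (∀ v ∈ r.head.vars, ∃ M ∈ r.body, v ∈ M.vars)

/-- all predicates of the rule are base predicates (magic and adorned
predicates are fresh) -/
def Rule.predsBase (r : Rule) : Prop :=
  ∀ p ∈ r.head.preds ++ r.body.flatMap MAtom.preds, ∃ n, p = PredSym.base n

/-- well-formed program: finite set of well-formed safe rules over base predicates -/
def ProgramWF (P : Program) : Prop :=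
  P.Finite ∧ ∀ r ∈ P, RuleWF r ∧ r.predsBase

/-- well-formed dataset: finite set of facts with nonempty intervals, over base
predicates -/
def DatasetWF (D : Dataset) : Prop :=
  D.Finite ∧ ∀ g ∈ D, g.ivl.NE ∧ ∃ n, g.pred = PredSym.base n

/-- normal form: no nested operators and every head of the form `⊞_ϱ R(s)`
or `⊟_ϱ R(s)` -/
def NormalForm (P : Program) : Prop :=
  ∀ r ∈ P, r.head.headNF ∧ ∀ M ∈ r.body, M.nonNested

/-- bounded program -/
def ProgramBounded (P : Program) : Prop :=
  ∀ r ∈ P, ∀ ρ ∈ r.head.ivls ++ r.body.flatMap MAtom.ivls, ρ.Bounded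

/-- bounded dataset -/
def DatasetBounded (D : Dataset) : Prop := ∀ g ∈ D, g.ivl.Bounded

/-! ## The magic-set rewriting -/

/-- `bt(s,γ)`: the subsequence of terms of `s` bound according to `γ` -/
def bt (ts : List Term) (γ : Adornment) : List Term :=
  ((ts.zip γ).filter fun p => p.2).map Prod.fst

/-- `bv(s,γ)`: the subsequence of variables of `s` bound according to `γ` -/
def bv (ts : List Term) (γ : Adornment) : List Term :=
  (bt ts γ).filter fun tm => match tm with | .var _ => true | .const _ => false

/-- `bt` on a ground tuple of constants -/
def btC (cs : List String) (γ : Adornment) : List String :=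
  ((cs.zip γ).filter fun p => p.2).map Prod.fst

/-- the adornment of the query: `b` exactly at the positions holding constants -/
def adornOfTerms (ts : List Term) : Adornment :=
  ts.map fun tm => match tm with | .const _ => true | .var _ => false

/-- adornment of a tuple given the list `B` of bound variables: constants and
variables from `B` are bound -/
def adornTerms (B : List String) (ts : List Term) : Adornment :=
  ts.map fun tm => match tm with | .const _ => true | .var v => B.contains v

/-- the head predicate name of a (normal-form) rule -/
def headName (r : Rule) : Option String :=
  match r.head with
  | .boxPlus _ (.rel (.base n) _) => some n
  | .boxMinus _ (.rel (.base n) _) => some n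
  | .rel (.base n) _ => some n
  | _ => none

/-- the argument tuple of the head of a (normal-form) rule -/
def headArgs (r : Rule) : List Term :=
  match r.head with
  | .boxPlus _ (.rel _ ts) => ts
  | .boxMinus _ (.rel _ ts) => ts
  | .rel _ ts => ts
  | _ => []

/-- `n` is an idb predicate in `P`: it occurs in the head of some rule -/
def isIdbName (P : Program) (n : String) : Prop :=
  ∃ r ∈ P, headName r = some n

/-- adorn a base predicate occurring with argument tuple `ts`, given
bound variables `B` -/
def adornPredOf (B : List String) (p : PredSym) (ts : List Term) : PredSym :=
  match p with
  | .base n => .adorned n (adornTerms B ts)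
  | _ => p

/-- adorn all relational atoms of a metric atom, given bound variables `B` -/
def MAtom.adornWith (B : List String) : MAtom → MAtom
  | .top => .top
  | .bot => .bot
  | .rel p ts => .rel (adornPredOf B p ts) ts
  | .boxPlus ρ M => .boxPlus ρ (M.adornWith B)
  | .boxMinus ρ M => .boxMinus ρ (M.adornWith B)
  | .diaPlus ρ M => .diaPlus ρ (M.adornWith B)
  | .diaMinus ρ M => .diaMinus ρ (M.adornWith B)
  | .until_ ρ M₂ M₁ => .until_ ρ (M₂.adornWith B) (M₁.adornWith B)
  | .since_ ρ M₂ M₁ => .since_ ρ (M₂.adornWith B) (M₁.adornWith B)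

/-- adorn the head of a (normal-form) rule with `γ` -/
def adornHead (γ : Adornment) : MAtom → MAtom
  | .boxPlus ρ (.rel (.base n) ts) => .boxPlus ρ (.rel (.adorned n γ) ts)
  | .boxMinus ρ (.rel (.base n) ts) => .boxMinus ρ (.rel (.adorned n γ) ts)
  | M => M

/-- variables of the head bound according to `γ` -/
def headBoundVars (r : Rule) (γ : Adornment) : List String :=
  (bv (headArgs r) γ).flatMap Term.vars

/-- the adorned version of rule `r` for head adornment `γ`: an occurrence of
a variable in the `i`-th body atom is bound iff the variable is bound in the
head or occurs in a body atom strictly to the left -/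
def adornRule (r : Rule) (γ : Adornment) : Rule :=
  ⟨adornHead γ r.head,
   r.body.mapIdx fun i M =>
     M.adornWith (headBoundVars r γ ++ (r.body.take i).flatMap MAtom.vars)⟩

/-- the adorned idb predicates reachable by the adornment procedure started
from `Q^{γ₀}` -/
inductive Reach (P : Program) (Q : String) (γ₀ : Adornment) :
    String → Adornment → Prop where
  | init : Reach P Q γ₀ Q γ₀
  | step {R : String} {γ : Adornment} {S : String} {γ' : Adornment} (r : Rule) :
      Reach P Q γ₀ R γ → r ∈ P → headName r = some R →
      (∃ M ∈ (adornRule r γ).body, PredSym.adorned S γ' ∈ M.preds) →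
      isIdbName P S →
      Reach P Q γ₀ S γ'

/-- the adorned program `P_a` -/
def adornedProg (P : Program) (Q : String) (γ₀ : Adornment) : Set Rule :=
  {ra | ∃ r ∈ P, ∃ R γ, Reach P Q γ₀ R γ ∧ headName r = some R ∧
    ra = adornRule r γ}

/-- the magic body atom added for an adorned head -/
def magicBodyAtom : MAtom → Option MAtom
  | .boxPlus ρ (.rel (.adorned R γ) s) =>
      some (.diaPlus ρ (.rel (.magic R γ) (bv s γ)))
  | .boxMinus ρ (.rel (.adorned R γ) s) =>
      some (.diaMinus ρ (.rel (.magic R γ) (bv s γ)))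
  | _ => none

/-- the rules `P1x` of the first type -/
def magicProg1 (Pa : Set Rule) : Set Rule :=
  {r' | ∃ r ∈ Pa, ∃ m, magicBodyAtom r.head = some m ∧
    r' = ⟨r.head, m :: r.body⟩}

open Classical in
/-- replacing every adorned idb relational atom `R^γ(s)` by `m_R^γ(bv(s,γ))` -/
noncomputable def magicize (P : Program) : MAtom → MAtom
  | .top => .top
  | .bot => .bot
  | .rel p ts =>
      match p with
      | .adorned n γ =>
          if isIdbName P n then .rel (.magic n γ) (bv ts γ) else .rel (.adorned n γ) ts
      | _ => .rel p ts
  | .boxPlus ρ M => .boxPlus ρ (magicize P M)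
  | .boxMinus ρ M => .boxMinus ρ (magicize P M)
  | .diaPlus ρ M => .diaPlus ρ (magicize P M)
  | .diaMinus ρ M => .diaMinus ρ (magicize P M)
  | .until_ ρ M₂ M₁ => .until_ ρ (magicize P M₂) (magicize P M₁)
  | .since_ ρ M₂ M₁ => .since_ ρ (magicize P M₂) (magicize P M₁)

/-- `MagicHeadAtoms` -/
noncomputable def magicHeadAtoms (P : Program) (M : MAtom) : Set MAtom :=
  match magicize P M with
  | .boxPlus ρ M₁ => {MAtom.boxPlus ρ M₁}
  | .boxMinus ρ M₁ => {MAtom.boxMinus ρ M₁}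
  | .diaPlus ρ M₁ => {MAtom.boxPlus ρ M₁}
  | .diaMinus ρ M₁ => {MAtom.boxMinus ρ M₁}
  | .since_ ρ M₂ M₁ =>
      {A | (M₂.containsMagic ∧ A = MAtom.boxMinus ⟨some 0, ρ.hi, false, false⟩ M₂) ∨
           (M₁.containsMagic ∧ A = MAtom.boxMinus ρ M₁)}
  | .until_ ρ M₂ M₁ =>
      {A | (M₂.containsMagic ∧ A = MAtom.boxPlus ⟨some 0, ρ.hi, false, false⟩ M₂) ∨
           (M₁.containsMagic ∧ A = MAtom.boxPlus ρ M₁)}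
  | M' => {M'}

/-- a (adorned) body atom whose predicate is idb in `P` -/
def atomIdb (P : Program) (M : MAtom) : Prop :=
  ∃ n γ, PredSym.adorned n γ ∈ M.preds ∧ isIdbName P n

/-- the rules `P2x` of the second type -/
noncomputable def magicProg2 (P : Program) (P1 : Set Rule) : Set Rule :=
  {r' | ∃ r ∈ P1, ∃ i : ℕ, ∃ M, r.body[i]? = some M ∧ atomIdb P M ∧
    ∃ M' ∈ magicHeadAtoms P M, r' = ⟨M', r.body.take i⟩}

/-- deleting adornments from non-magic predicates -/
def PredSym.unadorn : PredSym → PredSym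
  | .adorned n _ => .base n
  | p => p

def MAtom.unadorn : MAtom → MAtom
  | .top => .top
  | .bot => .bot
  | .rel p ts => .rel p.unadorn ts
  | .boxPlus ρ M => .boxPlus ρ M.unadorn
  | .boxMinus ρ M => .boxMinus ρ M.unadorn
  | .diaPlus ρ M => .diaPlus ρ M.unadorn
  | .diaMinus ρ M => .diaMinus ρ M.unadorn
  | .until_ ρ M₂ M₁ => .until_ ρ M₂.unadorn M₁.unadorn
  | .since_ ρ M₂ M₁ => .since_ ρ M₂.unadorn M₁.unadorn

def Rule.unadorn (r : Rule) : Rule :=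
  ⟨r.head.unadorn, r.body.map MAtom.unadorn⟩

/-- the program `Pm` produced by `MagicRewriting(P, D, Q(s)@ϱ)`
(it does not depend on `D` nor on `ϱ`) -/
noncomputable def magicProgram (P : Program) (Q : String) (s : List Term) :
    Set Rule :=
  Rule.unadorn ''
    (magicProg1 (adornedProg P Q (adornOfTerms s)) ∪
     magicProg2 P (magicProg1 (adornedProg P Q (adornOfTerms s))))

def termToConst : Term → String
  | .const c => c
  | .var v => v

/-- the magic fact `m_Q^{γ₀}(bt(s,γ₀))@ϱ` added to the dataset -/
def magicFact (Q : String) (s : List Term) (ρ : Ivl) : TFact :=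
  ⟨.magic Q (adornOfTerms s), (bt s (adornOfTerms s)).map termToConst, ρ⟩

/-- the dataset `D′` produced by `MagicRewriting(P, D, Q(s)@ϱ)` -/
def magicDataset (D : Dataset) (Q : String) (s : List Term) (ρ : Ivl) :
    Dataset :=
  D ∪ {magicFact Q s ρ}

/-- `σ(s)` as a ground tuple of constants -/
def groundTuple (σ : Subst) (s : List Term) : List String :=
  s.map fun tm => match tm with | .var v => σ v | .const c => c

/-- `toRule(R(c)@(−∞,+∞))` is the rule `R(c) ← ⊤` -/
def TFact.toRule (g : TFact) : Rule :=
  ⟨.rel g.pred (g.args.map Term.const), [.top]⟩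

/-- `swap(E)` -/
def swapE (E : Set TFact) : Set Rule := TFact.toRule '' E

/-- the rule `m_Q^{γ₀}(bt(s,γ₀)) ← ⊤` -/
def topRule (Q : String) (s : List Term) : Rule :=
  ⟨.rel (.magic Q (adornOfTerms s)) (bt s (adornOfTerms s)), [.top]⟩

/-- a predicate occurs in a program -/
def predOccursInProg (P : Set Rule) (p : PredSym) : Prop :=
  ∃ r ∈ P, p ∈ r.head.preds ∨ ∃ M ∈ r.body, p ∈ M.preds

/-- a predicate occurs in a dataset -/
def predOccursInData (D : Set TFact) (p : PredSym) : Prop :=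
  ∃ g ∈ D, g.pred = p

/-- a magic predicate -/
def PredSym.IsMagic : PredSym → Prop
  | .magic _ _ => True
  | _ => False

/-! ### Rule heads and intersections of interpretations -/

theorem satAt_mono {I J : Interp} (h : ∀ u, I u ⊆ J u) (M : MAtom) (t : ℚ) :
    satAt I t M → satAt J t M := by
  induction M generalizing t with
  | top => exact id
  | bot => exact id
  | rel p ts => rintro ⟨cs, hcs, hm⟩; exact ⟨cs, hcs, h t hm⟩
  | boxPlus ρ M ih => exact fun H t₁ h₁ => ih t₁ (H t₁ h₁)
  | boxMinus ρ M ih => exact fun H t₁ h₁ => ih t₁ (H t₁ h₁)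
  | diaPlus ρ M ih => rintro ⟨t₁, h₁, H⟩; exact ⟨t₁, h₁, ih t₁ H⟩
  | diaMinus ρ M ih => rintro ⟨t₁, h₁, H⟩; exact ⟨t₁, h₁, ih t₁ H⟩
  | until_ ρ M₂ M₁ ih₂ ih₁ =>
    rintro ⟨t₁, h₁, H₁, H₂⟩
    exact ⟨t₁, h₁, ih₁ t₁ H₁, fun t₂ a b => ih₂ t₂ (H₂ t₂ a b)⟩
  | since_ ρ M₂ M₁ ih₂ ih₁ =>
    rintro ⟨t₁, h₁, H₁, H₂⟩
    exact ⟨t₁, h₁, ih₁ t₁ H₁, fun t₂ a b => ih₂ t₂ (H₂ t₂ a b)⟩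

/-- A relational atom instantiated by `σ` is ground, so its satisfaction is membership of the one
tuple `groundTuple σ ts`; the tuple does not depend on the interpretation. -/
theorem satAt_rel_subst (J : Interp) (t : ℚ) (p : PredSym) (ts : List Term) (σ : Subst) :
    satAt J t ((MAtom.rel p ts).subst σ) ↔ (p, groundTuple σ ts) ∈ J t := by
  have hts : (ts.map fun tm => match tm with
        | .var v => Term.const (σ v)
        | .const c => Term.const c) = (groundTuple σ ts).map Term.const := by
    unfold groundTuple
    rw [List.map_map]
    refine List.map_congr_left fun tm _ => ?_
    cases tm <;> rfl
  constructor
  · rintro ⟨cs, hcs, hm⟩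
    have hinj : Function.Injective (List.map Term.const) :=
      List.map_injective_iff.2 fun a b hab => Term.const.inj hab
    rwa [hinj (hts.symm.trans hcs)]
  · exact fun hm => ⟨_, hts, hm⟩

/-- Satisfaction of instances of legal heads passes to intersections of interpretations
(it would fail for `◇` or `U`, whose witnesses may differ between the members of `S`). -/
theorem satAt_head_iInter (S : Set Interp) (σ : Subst) (M : MAtom) (hM : M.headOK) (t : ℚ)
    (h : ∀ J ∈ S, satAt J t (M.subst σ)) :
    satAt (fun u => ⋂ J ∈ S, J u) t (M.subst σ) := by
  induction M generalizing t with
  | top => trivial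
  | rel p ts =>
    rw [satAt_rel_subst]
    exact Set.mem_iInter₂.2 fun J hJ => (satAt_rel_subst J t p ts σ).1 (h J hJ)
  | boxPlus ρ M ih => exact fun t₁ h₁ => ih hM t₁ fun J hJ => h J hJ t₁ h₁
  | boxMinus ρ M ih => exact fun t₁ h₁ => ih hM t₁ fun J hJ => h J hJ t₁ h₁
  | bot => exact hM.elim
  | diaPlus ρ M ih => exact hM.elim
  | diaMinus ρ M ih => exact hM.elim
  | until_ ρ M₂ M₁ ih₂ ih₁ => exact hM.elim
  | since_ ρ M₂ M₁ ih₂ ih₁ => exact hM.elim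

/-- The intersection defining `T_P(ℑ)` belongs to the family it is taken over, as far as the rules
with legal heads are concerned. -/
theorem satAt_head_TP (P : Program) (I : Interp) (r : Rule) (hr : r ∈ P) (hh : r.head.headOK)
    (σ : Subst) (u : ℚ) (hb : ∀ M ∈ r.body, satAt I u (M.subst σ)) :
    satAt (TP P I) u (r.head.subst σ) :=
  satAt_head_iInter _ σ r.head hh u fun _ hJ => hJ.2 r hr σ u hb

theorem groundTuple_const (σ : Subst) (cs : List String) :
    groundTuple σ (cs.map Term.const) = cs := by
  simp [groundTuple, Function.comp_def]

/-- if `T_P(ℑ_D) = ℑ_D` and every fact of `E` has interval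
`(−∞,+∞)`, then one application of `T_{P ∪ swap(E)}` to `ℑ_D` yields exactly
`ℑ_{D ∪ E}`. -/
theorem swap_first_step
    (P : Program) (D : Dataset) (hP : ProgramWF P) (hD : DatasetWF D)
    (hfix : TP P (leastModel D) = leastModel D)
    (E : Set TFact) (hE : ∀ g ∈ E, g.ivl.lo = none ∧ g.ivl.hi = none) :
    TP (P ∪ swapE E) (leastModel D) = leastModel (D ∪ E) := by
  have hmono : ∀ u, leastModel D u ⊆ leastModel (D ∪ E) u :=
    fun u a ⟨g, hg, h⟩ => ⟨g, Or.inl hg, h⟩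
  funext t
  apply Set.Subset.antisymm
  · refine Set.biInter_subset_of_mem (t := fun J : Interp => J t) ⟨hmono, ?_⟩
    rintro r (hr | ⟨g, hg, rfl⟩) σ u hb
    · have hsat := satAt_head_TP P (leastModel D) r hr (hP.2 r hr).1.2.1 σ u hb
      rw [hfix] at hsat
      exact satAt_mono hmono _ _ hsat
    · refine (satAt_rel_subst _ u g.pred _ σ).2 ?_
      rw [groundTuple_const]
      exact ⟨g, Or.inr hg, rfl, rfl, by simp [Ivl.mem, hE g hg]⟩
  · rintro ⟨p, cs⟩ ⟨g, hg | hg, rfl, rfl, ht⟩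
    · exact Set.mem_iInter₂.2 fun J hJ => hJ.1 t ⟨g, hg, rfl, rfl, ht⟩
    · refine Set.mem_iInter₂.2 fun J hJ => ?_
      -- The body `⊤` of `toRule g` holds everywhere; as `g` is ground, any substitution will do.
      have hsat := hJ.2 g.toRule (Or.inr ⟨g, hg, rfl⟩) id t
        (by simp [TFact.toRule, MAtom.subst, satAt])
      have hmem := (satAt_rel_subst J t g.pred _ id).1 hsat
      rwa [groundTuple_const] at hmem
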